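/- Let I ⊂ S be a polymatroidal ideal. Then v(I^k) = α(I)·k − 1 for all k ≥ 1. -/

import Mathlib

open MvPolynomial

noncomputable section

variable (K : Type*) [Field K]

/-- The set of associated primes of `S/I`. -/
def assPrimes {σ : Type*} (I : Ideal (MvPolynomial σ K)) : Set (Ideal (MvPolynomial σ K)) :=
  associatedPrimes (MvPolynomial σ K) (MvPolynomial σ K ⧸ I)

/-- The v-number of `I` at a prime `p`:
`min {d : ∃ homogeneous f of degree d with (I : f) = p}`. -/
def vNumberAt {σ : Type*} (I p : Ideal (MvPolynomial σ K)) : ℕ :=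
  sInf {d | ∃ f : MvPolynomial σ K, f.IsHomogeneous d ∧ I.colon (Ideal.span {f}) = p}

/-- The v-number of `I`:
`min {d : ∃ homogeneous f of degree d with (I : f) ∈ Ass(I)}`. -/
def vNumber {σ : Type*} (I : Ideal (MvPolynomial σ K)) : ℕ :=
  sInf {d | ∃ f : MvPolynomial σ K, f.IsHomogeneous d ∧
    I.colon (Ideal.span {f}) ∈ assPrimes K I}

/-- The initial degree `α(I) = min {d : I_d ≠ 0}`. -/
def initialDegree {σ : Type*} (I : Ideal (MvPolynomial σ K)) : ℕ :=
  sInf {d | ∃ f ∈ I, f ≠ 0 ∧ f.IsHomogeneous d}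

/-- The monomial with exponent vector `m`. -/
def mon {σ : Type*} (m : σ →₀ ℕ) : MvPolynomial σ K := monomial m 1

/-- The degree of an exponent vector. -/
def mdeg {σ : Type*} (m : σ →₀ ℕ) : ℕ := m.sum fun _ e => e

/-- `U` is the minimal monomial generating set `G(I)` of the monomial ideal `I`. -/
def MinimalGens {σ : Type*} [DecidableEq σ] (I : Ideal (MvPolynomial σ K))
    (U : Finset (σ →₀ ℕ)) : Prop :=
  I = Ideal.span (mon K '' (U : Set (σ →₀ ℕ))) ∧
    ∀ m ∈ U, mon K m ∉ Ideal.span (mon K '' ((U.erase m : Finset (σ →₀ ℕ)) : Set (σ →₀ ℕ)))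

/-- A polymatroidal ideal: a monomial ideal generated in a single degree whose minimal
generators satisfy the exchange property. -/
def IsPolymatroidal {n : ℕ} (I : Ideal (MvPolynomial (Fin n) K)) : Prop :=
  ∃ (U : Finset (Fin n →₀ ℕ)) (d : ℕ), MinimalGens K I U ∧ (∀ m ∈ U, mdeg m = d) ∧
    ∀ u ∈ U, ∀ v ∈ U, ∀ i, v i < u i →
      ∃ j, u j < v j ∧ (u - Finsupp.single i 1 + Finsupp.single j 1) ∈ U

/-
Let `I` be generated by the monomials `x ^ u`, `u ∈ U`, all of degree `d > 0`. If `(I ^ k : f)` is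
prime, it contains `I ^ k`, hence some variable `X i`; so `X i * f ∈ I ^ k` and `deg f ≥ d * k - 1`.
For the converse, let `u ∈ U` with `u i > 0`, and let `A` be the set of all `j` for which
`x_j (x ^ u / x_i)` is a generator. By the exchange property `u` has minimal `A`-degree `c` in `U`.
As `x ^ (k • u) / x_i` has `A`-degree `k * c - 1`, every monomial multiplying it into `I ^ k` has
positive `A`-degree. Hence `(I ^ k : x ^ (k • u) / x_i)` is the prime ideal generated by the `X j`,
`j ∈ A`.
-/

open Finsupp (weight)

section Exchange

variable {σ : Type*} {U : Set (σ →₀ ℕ)} {u v : σ →₀ ℕ}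

/-- The exponent vector of `x_j (x ^ u / x_i)`, meaningful when `0 < u i`. -/
def exchange (u : σ →₀ ℕ) (i j : σ) : σ →₀ ℕ :=
  u - Finsupp.single i 1 + Finsupp.single j 1

/-- The exchange property of the set of bases of a discrete polymatroid. -/
def ExchangeProperty (U : Set (σ →₀ ℕ)) : Prop :=
  ∀ u ∈ U, ∀ v ∈ U, ∀ i, v i < u i → ∃ j, u j < v j ∧ exchange u i j ∈ U

/-- The positions `j` to which `u` can move one unit from position `i` without leaving `U`. -/
def exchangeSet (U : Set (σ →₀ ℕ)) (u : σ →₀ ℕ) (i : σ) : Set σ :=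
  {j | exchange u i j ∈ U}

lemma exchange_apply [DecidableEq σ] (u : σ →₀ ℕ) (i j l : σ) :
    exchange u i j l = u l - (if i = l then 1 else 0) + (if j = l then 1 else 0) := by
  simp [exchange, Finsupp.single_apply]

lemma self_mem_exchangeSet (hu : u ∈ U) {i : σ} (hi : 0 < u i) : i ∈ exchangeSet U u i := by
  rwa [exchangeSet, Set.mem_ofPred_eq, exchange, Finsupp.sub_add_single_one_cancel hi.ne']

lemma weight_exchange_add (w : σ → ℕ) {i : σ} (hi : 0 < u i) (j : σ) :
    weight w (exchange u i j) + w i = weight w u + w j := by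
  rw [exchange, map_add, Finsupp.weight_single, one_smul, add_right_comm,
    Finsupp.weight_sub_single_add hi.ne']

lemma weight_one (u : σ →₀ ℕ) : weight 1 u = u.degree :=
  (DFunLike.congr_fun Finsupp.degree_eq_weight_one u).symm

lemma degree_exchange {i : σ} (hi : 0 < u i) (j : σ) : (exchange u i j).degree = u.degree := by
  simpa [weight_one] using weight_exchange_add 1 hi j

lemma degree_exchange_sub_lt {i j : σ} (hi : v i < u i) (hj : u j < v j) :
    (exchange u i j - v).degree < (u - v).degree := by
  classical
  have hsub : exchange u i j - v + Finsupp.single i 1 = u - v := by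
    ext l
    rw [Finsupp.add_apply, Finsupp.tsub_apply, Finsupp.tsub_apply, exchange_apply,
      Finsupp.single_apply]
    grind
  rw [← hsub, map_add, Finsupp.degree_single]
  exact Nat.lt_succ_self _

lemma exists_lt_of_weight_lt {w : σ → ℕ} (h : weight w v < weight w u) :
    ∃ a, w a ≠ 0 ∧ v a < u a := by
  classical
  simp only [Finsupp.weight_apply, smul_eq_mul] at h
  rw [v.sum_of_support_subset (Finset.subset_union_left (s₂ := u.support)) _ (by simp),
    u.sum_of_support_subset (Finset.subset_union_right (s₁ := v.support)) _ (by simp)] at h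
  obtain ⟨a, -, ha⟩ := Finset.exists_lt_of_sum_lt h
  exact ⟨a, right_ne_zero_of_mul (Nat.ne_zero_of_lt ha), lt_of_mul_lt_mul_right' ha⟩

namespace ExchangeProperty

lemma degree_le_degree (hU : ExchangeProperty U) (hu : u ∈ U) (hv : v ∈ U) :
    u.degree ≤ v.degree := by
  induction hN : (u - v).degree using Nat.strong_induction_on generalizing u with
  | _ N ih =>
    by_cases huv : u ≤ v
    · exact Finsupp.degree_mono huv
    · obtain ⟨i, hi⟩ : ∃ i, v i < u i := by simpa [Finsupp.le_def] using huv
      obtain ⟨j, hj, hjU⟩ := hU u hu v hv i hi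
      rw [← degree_exchange (Nat.zero_lt_of_lt hi) j]
      exact ih _ (hN ▸ degree_exchange_sub_lt hi hj) hjU rfl

lemma degree_eq_degree (hU : ExchangeProperty U) (hu : u ∈ U) (hv : v ∈ U) :
    u.degree = v.degree :=
  (hU.degree_le_degree hu hv).antisymm (hU.degree_le_degree hv hu)

lemma mem_exchangeSet_trans (hU : ExchangeProperty U) (hu : u ∈ U) {i a j : σ} (hi : 0 < u i)
    (ha : 0 < u a) (hia : a ∈ exchangeSet U u i) (haj : j ∈ exchangeSet U u a) :
    j ∈ exchangeSet U u i := by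
  classical
  rcases eq_or_ne a i with rfl | hai
  · exact haj
  rcases eq_or_ne j a with rfl | hja
  · exact hia
  rcases eq_or_ne j i with rfl | hji
  · exact self_mem_exchangeSet hu hi
  obtain ⟨b, hb, hbU⟩ := hU _ haj _ hia i (by simp only [exchange_apply]; grind)
  -- `exchange u i a` exceeds `exchange u a j` only at `a`.
  obtain rfl : b = a := by simp only [exchange_apply] at hb; grind
  have hcomp : exchange (exchange u b j) i b = exchange u i j := by
    ext l
    simp only [exchange_apply]
    grind
  rwa [exchangeSet, Set.mem_ofPred_eq, ← hcomp]

theorem weight_exchangeSet_le (hU : ExchangeProperty U) (hu : u ∈ U) {i : σ} (hi : 0 < u i)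
    (hv : v ∈ U) :
    weight ((exchangeSet U u i).indicator (1 : σ → ℕ)) u ≤
      weight ((exchangeSet U u i).indicator (1 : σ → ℕ)) v := by
  set A := exchangeSet U u i
  induction hN : (v - u).degree using Nat.strong_induction_on generalizing v with
  | _ N ih =>
    by_contra! hlt
    obtain ⟨a, haA, hav⟩ := exists_lt_of_weight_lt hlt
    obtain ⟨j, hj, hjU⟩ := hU u hu v hv a hav
    have hjA : j ∈ A := hU.mem_exchangeSet_trans hu hi (Nat.zero_lt_of_lt hav)
      (Set.mem_of_indicator_ne_zero haA) hjU
    obtain ⟨b, hb, hbU⟩ := hU v hv u hu j hj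
    have hmin := ih _ (hN ▸ degree_exchange_sub_lt hj hb) hbU rfl
    have hweight := weight_exchange_add (A.indicator 1) (Nat.zero_lt_of_lt hj) b
    have hb_le : A.indicator (1 : σ → ℕ) b ≤ 1 := Set.indicator_le_self A 1 b
    rw [Set.indicator_of_mem hjA, Pi.one_apply] at hweight
    omega

end ExchangeProperty

end Exchange

section WeightFiltration

variable {σ R : Type*} [CommSemiring R]

variable (R) in
/-- The ideal of polynomials all of whose monomials have `w`-weight at least `c`. For `w = 1` it is
the `c`-th power of the irrelevant ideal, for the indicator function of a set `A` the `c`-th power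
of the ideal generated by the variables in `A`. -/
def weightFiltration (w : σ → ℕ) (c : ℕ) : Ideal (MvPolynomial σ R) :=
  restrictSupportIdeal R {m | c ≤ weight w m} fun _ _ hle hc => by
    obtain ⟨_, rfl⟩ := exists_add_of_le hle
    rw [Set.mem_ofPred_eq, map_add]
    exact le_add_right hc

lemma mem_weightFiltration {w : σ → ℕ} {c : ℕ} {f : MvPolynomial σ R} :
    f ∈ weightFiltration R w c ↔ ∀ m ∈ f.support, c ≤ weight w m :=
  Iff.rfl

lemma monomial_mem_weightFiltration {w : σ → ℕ} {m : σ →₀ ℕ} {c : ℕ} (h : c ≤ weight w m) (r : R) :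
    monomial m r ∈ weightFiltration R w c :=
  (monomial_mem_restrictSupport R).2 (Or.inl h)

lemma weightFiltration_mul_le (w : σ → ℕ) (a b : ℕ) :
    weightFiltration R w a * weightFiltration R w b ≤ weightFiltration R w (a + b) := by
  classical
  refine Ideal.mul_le.2 fun f hf g hg => mem_weightFiltration.2 fun m hm => ?_
  obtain ⟨p, hp, q, hq, rfl⟩ := Finset.mem_add.1 (support_mul f g hm)
  rw [map_add]
  exact add_le_add (mem_weightFiltration.1 hf p hp) (mem_weightFiltration.1 hg q hq)

lemma weightFiltration_pow_le (w : σ → ℕ) (c k : ℕ) :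
    weightFiltration R w c ^ k ≤ weightFiltration R w (c * k) := by
  induction k with
  | zero => exact fun f _ => mem_weightFiltration.2 fun m _ => by simp
  | succ k ih =>
    rw [pow_succ, Nat.mul_succ]
    exact (Ideal.mul_mono_left ih).trans (weightFiltration_mul_le w _ _)

lemma weightFiltration_colon_monomial_le (w : σ → ℕ) (c : ℕ) (m : σ →₀ ℕ) :
    (weightFiltration R w c).colon (Ideal.span {monomial m (1 : R)}) ≤
      weightFiltration R w (c - weight w m) := by
  refine fun g hg => mem_weightFiltration.2 fun p hp => ?_
  rw [Ideal.mem_colon_span_singleton] at hg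
  have hle := mem_weightFiltration.1 hg (p + m)
    (by rwa [mem_support_iff, coeff_mul_monomial, mul_one, ← mem_support_iff])
  rw [map_add] at hle
  exact Nat.sub_le_of_le_add hle

lemma weightFiltration_indicator_one_le (A : Set σ) :
    weightFiltration R (A.indicator 1) 1 ≤ Ideal.span (X '' A) := by
  refine fun f hf => mem_ideal_span_X_image.2 fun m hm => ?_
  have hpos : weight (A.indicator (1 : σ → ℕ)) (0 : σ →₀ ℕ) <
      weight (A.indicator (1 : σ → ℕ)) m := by
    rw [map_zero]
    exact mem_weightFiltration.1 hf m hm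
  obtain ⟨i, hiA, hi⟩ := exists_lt_of_weight_lt hpos
  exact ⟨i, Set.mem_of_indicator_ne_zero hiA, hi.ne'⟩

lemma le_of_mem_weightFiltration {w : σ → ℕ} {c e : ℕ} {f : MvPolynomial σ R}
    (hf : f ∈ weightFiltration R w c) (hf0 : f ≠ 0) (he : f.IsWeightedHomogeneous w e) : c ≤ e := by
  obtain ⟨m, hm⟩ := ne_zero_iff.1 hf0
  exact he hm ▸ mem_weightFiltration.1 hf m (mem_support_iff.2 hm)

end WeightFiltration

section MonomialPrimes

variable {σ R : Type*}

lemma exists_X_mem_of_monomial_mem [CommSemiring R] {P : Ideal (MvPolynomial σ R)} (hP : P.IsPrime)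
    {m : σ →₀ ℕ} (hm : monomial m 1 ∈ P) : ∃ i, X i ∈ P := by
  rw [monomial_eq, map_one, one_mul, Finsupp.prod, hP.prod_mem_iff] at hm
  obtain ⟨i, -, hi⟩ := hm
  exact ⟨i, hP.mem_of_pow_mem _ hi⟩

lemma span_X_image_eq_ker_killCompl [CommSemiring R] (A : Set σ) :
    Ideal.span (X '' A : Set (MvPolynomial σ R)) =
      RingHom.ker (killCompl (R := R) (Subtype.val_injective (p := (· ∈ Aᶜ)))) := by
  ext f
  rw [mem_ideal_span_X_image, RingHom.mem_ker, MvPolynomial.ext_iff]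
  simp only [coeff_killCompl, coeff_zero]
  constructor
  · intro h s
    by_contra hs
    obtain ⟨i, hiA, hi⟩ := h _ (mem_support_iff.2 hs)
    exact hi (Finsupp.mapDomain_of_notMem_range _ _ (by simpa using hiA))
  · intro h m hm
    by_contra! hmA
    have hrange : (m.support : Set σ) ⊆ Set.range (Subtype.val : ↥Aᶜ → σ) := by
      rw [Subtype.range_coe]
      exact fun i hi hiA => Finsupp.mem_support_iff.1 hi (hmA i hiA)
    rw [mem_support_iff, ← Finsupp.mapDomain_comapDomain _ Subtype.val_injective m hrange] at hm
    exact hm (h _)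

theorem isPrime_span_X_image [CommRing R] [IsDomain R] (A : Set σ) :
    (Ideal.span (X '' A : Set (MvPolynomial σ R))).IsPrime := by
  rw [span_X_image_eq_ker_killCompl]
  exact RingHom.ker_isPrime _

theorem le_add_one_of_isPrime_colon [CommSemiring R] [NoZeroDivisors R] [Nontrivial R]
    {J : Ideal (MvPolynomial σ R)} {c e : ℕ} (hJ : J ≤ weightFiltration R 1 c) {m : σ →₀ ℕ}
    (hm : monomial m 1 ∈ J)
    {f : MvPolynomial σ R} (he : f.IsHomogeneous e) (hP : (J.colon (Ideal.span {f})).IsPrime) :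
    c ≤ e + 1 := by
  have hf0 : f ≠ 0 := by
    rintro rfl
    exact hP.ne_top (by simp)
  obtain ⟨i, hi⟩ := exists_X_mem_of_monomial_mem hP (Ideal.le_colon hm)
  have hXf : X i * f ∈ weightFiltration R 1 c := hJ (Ideal.mem_colon_span_singleton.1 hi)
  rw [add_comm]
  exact le_of_mem_weightFiltration hXf (mul_ne_zero (X_ne_zero i) hf0)
    ((isHomogeneous_X R i).mul he)

end MonomialPrimes

section VNumber

variable {K} {σ : Type*}

lemma colon_mem_assPrimes_iff {I : Ideal (MvPolynomial σ K)} {f : MvPolynomial σ K} :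
    I.colon (Ideal.span {f}) ∈ assPrimes K I ↔ (I.colon (Ideal.span {f})).IsPrime := by
  refine ⟨fun h => h.isPrime, fun h => ⟨h, Ideal.Quotient.mk I f, ?_⟩⟩
  have hcolon : (⊥ : Submodule (MvPolynomial σ K) (MvPolynomial σ K ⧸ I)).colon
      {Ideal.Quotient.mk I f} = I.colon (Ideal.span {f}) := by
    ext g
    rw [Ideal.mem_colon_span_singleton, Submodule.mem_colon_singleton, Submodule.mem_bot,
      ← Ideal.Quotient.eq_zero_iff_mem]
    rfl
  rw [hcolon, h.radical]

lemma vNumber_eq_sInf (I : Ideal (MvPolynomial σ K)) :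
    vNumber K I = sInf {d | ∃ f : MvPolynomial σ K, f.IsHomogeneous d ∧
      (I.colon (Ideal.span {f})).IsPrime} := by
  simp only [vNumber, colon_mem_assPrimes_iff]

lemma vNumber_bot : vNumber K (⊥ : Ideal (MvPolynomial σ K)) = 0 := by
  rw [vNumber_eq_sInf]
  refine Nat.sInf_eq_zero.2 (Or.inl ⟨1, isHomogeneous_one _ _, ?_⟩)
  rw [Ideal.span_singleton_one]
  convert Ideal.isPrime_bot (α := MvPolynomial σ K) using 1
  simp

-- Junk value: no colon ideal of the unit ideal is prime, so the infimum is over the empty set.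
lemma vNumber_top : vNumber K (⊤ : Ideal (MvPolynomial σ K)) = 0 := by
  simp [vNumber_eq_sInf, Ideal.isPrime_iff]

lemma initialDegree_bot : initialDegree K (⊥ : Ideal (MvPolynomial σ K)) = 0 := by
  refine Nat.sInf_eq_zero.2 (Or.inr (Set.eq_empty_of_forall_notMem ?_))
  rintro d ⟨f, hf, hf0, -⟩
  exact hf0 hf

end VNumber

section EquigeneratedMonomialIdeals

variable {K} {σ : Type*} {U : Set (σ →₀ ℕ)} {u : σ →₀ ℕ} {d : ℕ}

lemma mon_mem_span (hu : u ∈ U) : mon K u ∈ Ideal.span (mon K '' U) :=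
  Ideal.subset_span ⟨u, hu, rfl⟩

lemma mon_nsmul_mem_span_pow (hu : u ∈ U) (k : ℕ) :
    mon K (k • u) ∈ Ideal.span (mon K '' U) ^ k := by
  simpa [mon, monomial_pow] using Ideal.pow_mem_pow (mon_mem_span (K := K) hu) k

lemma span_mon_le_weightFiltration {w : σ → ℕ} {c : ℕ} (hc : ∀ v ∈ U, c ≤ weight w v) :
    Ideal.span (mon K '' U) ≤ weightFiltration K w c := by
  rw [Ideal.span_le]
  rintro _ ⟨v, hv, rfl⟩
  exact monomial_mem_weightFiltration (hc v hv) 1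

lemma span_mon_pow_le_weightFiltration {w : σ → ℕ} {c : ℕ} (hc : ∀ v ∈ U, c ≤ weight w v) (k : ℕ) :
    Ideal.span (mon K '' U) ^ k ≤ weightFiltration K w (c * k) :=
  (Ideal.pow_right_mono (span_mon_le_weightFiltration hc) k).trans (weightFiltration_pow_le w c k)

theorem initialDegree_span_mon (hd : ∀ v ∈ U, v.degree = d) (hu : u ∈ U) :
    initialDegree K (Ideal.span (mon K '' U)) = d := by
  have hmem : d ∈ {e | ∃ f ∈ Ideal.span (mon K '' U), f ≠ 0 ∧ f.IsHomogeneous e} :=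
    ⟨mon K u, mon_mem_span hu, by simp [mon], isHomogeneous_monomial _ (hd u hu)⟩
  refine le_antisymm (Nat.sInf_le hmem) (le_csInf ⟨d, hmem⟩ ?_)
  rintro e ⟨f, hf, hf0, he⟩
  have hle := span_mon_le_weightFiltration (K := K)
    (fun v hv => ((weight_one v).trans (hd v hv)).ge)
  exact le_of_mem_weightFiltration (hle hf) hf0 he

end EquigeneratedMonomialIdeals

section Polymatroidal

variable {K} {σ : Type*} {U : Set (σ →₀ ℕ)} {u : σ →₀ ℕ} {i : σ}

lemma span_X_exchangeSet_le_colon (hu : u ∈ U) (k : ℕ) :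
    Ideal.span (X '' exchangeSet U u i) ≤ (Ideal.span (mon K '' U) ^ (k + 1)).colon
      (Ideal.span {mon K (k • u + (u - Finsupp.single i 1))}) := by
  rw [Ideal.span_le]
  rintro _ ⟨j, hj, rfl⟩
  have hfactor : (X j : MvPolynomial σ K) * mon K (k • u + (u - Finsupp.single i 1)) =
      mon K (k • u) * mon K (exchange u i j) := by
    simp only [mon, X, exchange, monomial_mul, mul_one]
    rw [add_comm, add_assoc]
  rw [SetLike.mem_coe, Ideal.mem_colon_span_singleton, hfactor, pow_succ]
  exact Ideal.mul_mem_mul (mon_nsmul_mem_span_pow hu k) (mon_mem_span hj)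

lemma ExchangeProperty.colon_le_span_X_exchangeSet (hU : ExchangeProperty U) (hu : u ∈ U)
    (hi : 0 < u i) (k : ℕ) :
    (Ideal.span (mon K '' U) ^ (k + 1)).colon
      (Ideal.span {mon K (k • u + (u - Finsupp.single i 1))}) ≤
        Ideal.span (X '' exchangeSet U u i) := by
  set w : σ → ℕ := (exchangeSet U u i).indicator 1
  set m := k • u + (u - Finsupp.single i 1) with hm
  have hwm : weight w u * (k + 1) - weight w m = 1 := by
    have hwi : w i = 1 := Set.indicator_of_mem (self_mem_exchangeSet hu hi) 1
    have hsub := Finsupp.weight_sub_single_add (w := w) hi.ne'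
    rw [hm, map_add, map_nsmul, smul_eq_mul, mul_add_one, mul_comm]
    omega
  calc _ ≤ (weightFiltration K w (weight w u * (k + 1))).colon (Ideal.span {mon K m}) :=
        Submodule.colon_mono (span_mon_pow_le_weightFiltration
          (fun v hv => hU.weight_exchangeSet_le hu hi hv) (k + 1)) le_rfl
    _ ≤ weightFiltration K w 1 :=
        (weightFiltration_colon_monomial_le w _ m).trans_eq (by rw [hwm])
    _ ≤ Ideal.span (X '' exchangeSet U u i) := weightFiltration_indicator_one_le _

theorem ExchangeProperty.exists_isPrime_colon (hU : ExchangeProperty U) (hu : u ∈ U)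
    (hu0 : u ≠ 0) (k : ℕ) :
    ∃ f : MvPolynomial σ K, f.IsHomogeneous (u.degree * (k + 1) - 1) ∧
      ((Ideal.span (mon K '' U) ^ (k + 1)).colon (Ideal.span {f})).IsPrime := by
  obtain ⟨i, hi⟩ := Finsupp.ne_iff.1 hu0
  have hpos : 0 < u i := Nat.pos_of_ne_zero hi
  refine ⟨mon K (k • u + (u - Finsupp.single i 1)), isHomogeneous_monomial _ ?_, ?_⟩
  · have hdeg := congrArg Finsupp.degree (Finsupp.sub_add_single_one_cancel hi)
    rw [map_add, Finsupp.degree_single] at hdeg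
    rw [map_add, map_nsmul, smul_eq_mul, mul_add_one, mul_comm]
    omega
  · rw [(hU.colon_le_span_X_exchangeSet hu hpos k).antisymm (span_X_exchangeSet_le_colon hu k)]
    exact isPrime_span_X_image _

theorem ExchangeProperty.vNumber_span_mon_pow (hU : ExchangeProperty U) (hu : u ∈ U)
    (hu0 : u ≠ 0) (k : ℕ) :
    vNumber K (Ideal.span (mon K '' U) ^ (k + 1)) = u.degree * (k + 1) - 1 := by
  have hmem := hU.exists_isPrime_colon (K := K) hu hu0 k
  have hle := span_mon_pow_le_weightFiltration (K := K)
    (fun v hv => ((weight_one v).trans (hU.degree_eq_degree hv hu)).ge) (k + 1)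
  rw [vNumber_eq_sInf]
  refine le_antisymm (Nat.sInf_le hmem) (le_csInf ⟨_, hmem⟩ ?_)
  rintro e ⟨f, he, hP⟩
  exact Nat.sub_le_of_le_add (le_add_one_of_isPrime_colon hle
    (mon_nsmul_mem_span_pow hu _) he hP)

end Polymatroidal

theorem stmt16_general {σ : Type*} {U : Set (σ →₀ ℕ)} (hU : ExchangeProperty U) {k : ℕ}
    (hk : 1 ≤ k) :
    vNumber K (Ideal.span (mon K '' U) ^ k) =
      initialDegree K (Ideal.span (mon K '' U)) * k - 1 := by
  obtain ⟨k, rfl⟩ := Nat.exists_eq_add_of_le' hk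
  rcases U.eq_empty_or_nonempty with rfl | ⟨u, hu⟩
  · rw [Set.image_empty, Ideal.span_empty, Ideal.bot_pow k.succ_ne_zero, vNumber_bot,
      initialDegree_bot, zero_mul, Nat.zero_sub]
  rw [initialDegree_span_mon (fun v hv => hU.degree_eq_degree hv hu) hu]
  rcases eq_or_ne u 0 with rfl | hu0
  · have htop : Ideal.span (mon K '' U) = ⊤ :=
      (Ideal.eq_top_iff_one _).2 (mon_mem_span (K := K) hu)
    rw [htop, Ideal.top_pow, vNumber_top, map_zero, zero_mul, Nat.zero_sub]
  · exact hU.vNumber_span_mon_pow hu hu0 k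

/-- For a polymatroidal ideal `I`, `v(I^k) = α(I)·k - 1` for all `k ≥ 1`. -/
theorem stmt16 {n : ℕ} (I : Ideal (MvPolynomial (Fin n) K))
    (hI : IsPolymatroidal K I) :
    ∀ k : ℕ, 1 ≤ k → vNumber K (I ^ k) = initialDegree K I * k - 1 := by
  obtain ⟨U, d, ⟨rfl, -⟩, -, hU⟩ := hI
  exact fun k hk => stmt16_general K (U := (U : Set (Fin n →₀ ℕ))) hU hk

end
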